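/- arXiv:2508.00770 — 2 statements merged into one kernel-verified Lean document; each statement's English description precedes it below -/
import Mathlib

section
/- Assume P and Q are continuous (the distribution of Λ under P is atomless). Let φ be a type-I risk safe binary test family with a decision curve, i.e., φ(x,b) = 1{Λ(x) ≥ t_φ(b)} for an increasing function t_φ : ℬ → [0,∞]. Then φ is 𝐂-inadmissible among binary test families if and only if there exists a type-I risk safe binary test family ψ with a decision curve t_ψ that Q-strictly dominates t_φ, meaning: t_ψ(b) ≤ t_φ(b) for all b ∈ ℬ, and there exists b* ∈ ℬ with t_ψ(b*) < t_φ(b*) and Q({x : t_ψ(b*) ≤ Λ(x) < t_φ(b*)}) > 0. -/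
open MeasureTheory
open scoped ENNReal

namespace PostHocTesting

variable {𝒳 : Type*} [MeasurableSpace 𝒳]

/-- The e-value associated to a test family `δ`:
`E_δ(x) = sup_{b ∈ ℬ} ℓ(b) · δ(x,b)`, valued in `ℝ≥0∞`. -/
noncomputable def Esup (ℬ : Set ℝ) (ℓ : ℝ → ℝ) (δ : 𝒳 → ℝ → ℝ) (x : 𝒳) : ℝ≥0∞ :=
  ⨆ b : ℬ, ENNReal.ofReal (ℓ (b : ℝ) * δ x (b : ℝ))

/-- A (randomized) test family: jointly measurable, `[0,1]`-valued on scenarios,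
with measurable associated e-value. -/
def IsTestFamily (ℬ : Set ℝ) (ℓ : ℝ → ℝ) (δ : 𝒳 → ℝ → ℝ) : Prop :=
  Measurable (fun p : 𝒳 × ℝ => δ p.1 p.2) ∧
  (∀ x : 𝒳, ∀ b ∈ ℬ, δ x b ∈ Set.Icc (0 : ℝ) 1) ∧
  Measurable (Esup ℬ ℓ δ)

/-- A binary test family takes only the values 0 and 1. -/
def IsBinaryTestFamily (ℬ : Set ℝ) (ℓ : ℝ → ℝ) (δ : 𝒳 → ℝ → ℝ) : Prop :=
  IsTestFamily ℬ ℓ δ ∧ ∀ x : 𝒳, ∀ b ∈ ℬ, δ x b = 0 ∨ δ x b = 1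

/-- Type-I risk `R_P(δ) = ∫ sup_{b∈ℬ} ℓ(b) δ(x,b) dP(x)`. -/
noncomputable def typeIRisk (P : Measure 𝒳) (ℬ : Set ℝ) (ℓ : ℝ → ℝ)
    (δ : 𝒳 → ℝ → ℝ) : ℝ≥0∞ :=
  ∫⁻ x, Esup ℬ ℓ δ x ∂P

/-- `δ` is type-I risk safe if `R_P(δ) ≤ 1`. -/
def RiskSafe (P : Measure 𝒳) (ℬ : Set ℝ) (ℓ : ℝ → ℝ) (δ : 𝒳 → ℝ → ℝ) : Prop :=
  typeIRisk P ℬ ℓ δ ≤ 1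

/-- Type-II risk of `δ` against the adversary `B`:
`∫ m(B(x)) (1 - δ(x, B(x))) dQ(x)`. -/
noncomputable def typeIIRisk (Q : Measure 𝒳) (m : ℝ → ℝ) (δ : 𝒳 → ℝ → ℝ)
    (B : 𝒳 → ℝ) : ℝ≥0∞ :=
  ∫⁻ x, ENNReal.ofReal (m (B x) * (1 - δ x (B x))) ∂Q

/-- The set `𝐂` of constant adversaries. -/
def ConstAdv (𝒳 : Type*) (ℬ : Set ℝ) : Set (𝒳 → ℝ) :=
  {B | ∃ b ∈ ℬ, B = fun _ => b}

/-- The set `𝐔` of all measurable adversaries. -/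
def AllAdv (𝒳 : Type*) [MeasurableSpace 𝒳] (ℬ : Set ℝ) : Set (𝒳 → ℝ) :=
  {B | Measurable B ∧ ∀ x, B x ∈ ℬ}

/-- `φ` is strictly preferable to `δ` relative to the adversary class `Γ`. -/
def StrictlyPreferable (P Q : Measure 𝒳) (ℬ : Set ℝ) (ℓ m : ℝ → ℝ)
    (Γ : Set (𝒳 → ℝ)) (φ δ : 𝒳 → ℝ → ℝ) : Prop :=
  RiskSafe P ℬ ℓ φ ∧
  (∀ B ∈ Γ, typeIIRisk Q m φ B ≤ typeIIRisk Q m δ B) ∧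
  (∃ B ∈ Γ, typeIIRisk Q m φ B < typeIIRisk Q m δ B)

/-- `Γ`-admissibility among randomized test families. -/
def Admissible (P Q : Measure 𝒳) (ℬ : Set ℝ) (ℓ m : ℝ → ℝ)
    (Γ : Set (𝒳 → ℝ)) (δ : 𝒳 → ℝ → ℝ) : Prop :=
  RiskSafe P ℬ ℓ δ ∧
  ∀ φ : 𝒳 → ℝ → ℝ, IsTestFamily ℬ ℓ φ → ¬ StrictlyPreferable P Q ℬ ℓ m Γ φ δ

/-- `Γ`-admissibility among binary test families. -/
def AdmissibleBinary (P Q : Measure 𝒳) (ℬ : Set ℝ) (ℓ m : ℝ → ℝ)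
    (Γ : Set (𝒳 → ℝ)) (δ : 𝒳 → ℝ → ℝ) : Prop :=
  RiskSafe P ℬ ℓ δ ∧
  ∀ φ : 𝒳 → ℝ → ℝ, IsBinaryTestFamily ℬ ℓ φ → ¬ StrictlyPreferable P Q ℬ ℓ m Γ φ δ

/-- Likelihood ratio `Λ = dQ/dP`. -/
noncomputable def LR (P Q : Measure 𝒳) (x : 𝒳) : ℝ := (Q.rnDeriv P x).toReal

/-- `P` and `Q` are continuous: the distribution of `Λ` under `P` is atomless. -/
def AtomlessLR (P Q : Measure 𝒳) : Prop := ∀ c : ℝ, P {x | LR P Q x = c} = 0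

open Set

/-!
Let `E` be the e-value of a competitor `ψ` of `φ`. In scenario `b` the test `ψ` rejects only on
`{E ≥ ℓ b}`; replace this event by `{Λ ≥ t b}` with the same `Q`-probability, which is possible
because `Λ` has no atoms. The power of each scenario does not decrease, and by the Neyman–Pearson
lemma the `P`-probability does not increase. The threshold `t b` is a monotone function of `ℓ b`,
so `t` is increasing and the new e-value exceeds `c` only on the replacement of `{E ≥ c}`.
By the layer cake formula the type-I risk does not increase. Finally, `t ≤ t_φ` because `t b` is
chosen as the least threshold whose superlevel set has the prescribed `Q`-probability.
-/

section LayerCake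

variable {α β : Type*} [MeasurableSpace α] [MeasurableSpace β] {μ : Measure α} {ν : Measure β}

theorem volume_restrict_Ioi_setOf_ofReal_lt (y : ℝ≥0∞) :
    volume.restrict (Ioi 0) {t : ℝ | ENNReal.ofReal t < y} = y := by
  rw [Measure.restrict_apply (measurableSet_lt ENNReal.measurable_ofReal measurable_const)]
  induction y with
  | top => simp
  | coe y =>
    have hIoo : {t : ℝ | ENNReal.ofReal t < y} ∩ Ioi 0 = Ioo 0 (y : ℝ) := by
      ext t
      rw [inter_comm]
      refine and_congr_right fun ht : 0 < t => ?_
      exact ENNReal.coe_lt_coe.trans (Real.toNNReal_lt_iff_lt_coe ht.le)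
    rw [hIoo]
    simp

theorem volume_restrict_Ioi_setOf_ofReal_le (y : ℝ≥0∞) :
    volume.restrict (Ioi 0) {t : ℝ | ENNReal.ofReal t ≤ y} = y := by
  rw [Measure.restrict_apply (measurableSet_le ENNReal.measurable_ofReal measurable_const)]
  induction y with
  | top => simp
  | coe y =>
    have hIoc : {t : ℝ | ENNReal.ofReal t ≤ y} ∩ Ioi 0 = Ioc 0 (y : ℝ) := by
      ext t
      rw [inter_comm]
      exact and_congr_right fun _ => ENNReal.coe_le_coe.trans Real.toNNReal_le_iff_le_coe
    rw [hIoc]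
    simp

theorem lintegral_eq_lintegral_measure_ofReal_lt [SFinite μ] {f : α → ℝ≥0∞} (hf : Measurable f) :
    ∫⁻ x, f x ∂μ = ∫⁻ t in Ioi (0 : ℝ), μ {x | ENNReal.ofReal t < f x} := by
  have hs : MeasurableSet {p : α × ℝ | ENNReal.ofReal p.2 < f p.1} :=
    measurableSet_lt (ENNReal.measurable_ofReal.comp measurable_snd) (hf.comp measurable_fst)
  calc ∫⁻ x, f x ∂μ
    _ = ∫⁻ x, volume.restrict (Ioi 0) {t : ℝ | ENNReal.ofReal t < f x} ∂μ :=
      lintegral_congr fun x => (volume_restrict_Ioi_setOf_ofReal_lt (f x)).symm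
    _ = _ := (Measure.prod_apply hs).symm.trans (Measure.prod_apply_symm hs)

theorem lintegral_eq_lintegral_measure_ofReal_le [SFinite μ] {f : α → ℝ≥0∞} (hf : Measurable f) :
    ∫⁻ x, f x ∂μ = ∫⁻ t in Ioi (0 : ℝ), μ {x | ENNReal.ofReal t ≤ f x} := by
  have hs : MeasurableSet {p : α × ℝ | ENNReal.ofReal p.2 ≤ f p.1} :=
    measurableSet_le (ENNReal.measurable_ofReal.comp measurable_snd) (hf.comp measurable_fst)
  calc ∫⁻ x, f x ∂μ
    _ = ∫⁻ x, volume.restrict (Ioi 0) {t : ℝ | ENNReal.ofReal t ≤ f x} ∂μ :=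
      lintegral_congr fun x => (volume_restrict_Ioi_setOf_ofReal_le (f x)).symm
    _ = _ := (Measure.prod_apply hs).symm.trans (Measure.prod_apply_symm hs)

theorem lintegral_le_lintegral_of_measure_lt_le_measure_le [SFinite μ] [SFinite ν]
    {f : α → ℝ≥0∞} {g : β → ℝ≥0∞} (hf : Measurable f) (hg : Measurable g)
    (h : ∀ c, μ {x | c < f x} ≤ ν {y | c ≤ g y}) :
    ∫⁻ x, f x ∂μ ≤ ∫⁻ y, g y ∂ν := by
  rw [lintegral_eq_lintegral_measure_ofReal_lt hf, lintegral_eq_lintegral_measure_ofReal_le hg]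
  exact lintegral_mono fun t => h _

end LayerCake

section UpperQuantile

variable {α : Type*} [CompleteLinearOrder α] [MeasurableSpace α]

/-- The upper `p`-quantile of `ν`: the least threshold whose upper tail has mass at most `p`. -/
def upperQuantile (ν : Measure α) (p : ℝ≥0∞) : α := sInf {t | ν (Ici t) ≤ p}

variable {ν : Measure α} {p : ℝ≥0∞}

theorem upperQuantile_le {t : α} (h : ν (Ici t) ≤ p) : upperQuantile ν p ≤ t := sInf_le h

theorem upperQuantile_antitone : Antitone (upperQuantile ν) :=
  fun _ _ hpq => sInf_le_sInf fun _ ht => ht.trans hpq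

variable [TopologicalSpace α] [OrderTopology α] [FirstCountableTopology α]
  [NullSingletonClass ν]

theorem measure_Ici_upperQuantile_le : ν (Ici (upperQuantile ν p)) ≤ p := by
  set S := {t | ν (Ici t) ≤ p}
  by_cases hS : sInf S ∈ S
  · exact hS
  have hne : S.Nonempty := ⟨⊤, by simp [S]⟩
  obtain ⟨u, hanti, hlim, hmem⟩ := exists_seq_tendsto_sInf hne (OrderBot.bddBelow S)
  have hlt (n : ℕ) : sInf S < u n :=
    (sInf_le (hmem n)).lt_of_ne fun h => hS (h ▸ hmem n)
  have hmono : Monotone fun n => Ici (u n) := fun _ _ h => Ici_subset_Ici.2 (hanti h)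
  calc ν (Ici (sInf S))
    _ = ν (Ioi (sInf S)) := measure_congr Ioi_ae_eq_Ici.symm
    _ = ⨆ n, ν (Ici (u n)) := by
      rw [← iUnion_Ici_eq_Ioi_of_lt_of_tendsto hlt hlim, hmono.measure_iUnion]
    _ ≤ p := iSup_le hmem

variable [DenselyOrdered α] [OpensMeasurableSpace α] [IsFiniteMeasure ν]

theorem measure_Ici_upperQuantile (hp : p ≤ ν univ) : ν (Ici (upperQuantile ν p)) = p := by
  refine measure_Ici_upperQuantile_le.antisymm ?_
  rcases eq_bot_or_bot_lt (upperQuantile ν p) with hbot | hbot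
  · rwa [hbot, Ici_bot]
  obtain ⟨u, hmono, hmem, hlim⟩ := exists_seq_strictMono_tendsto' hbot
  have hanti : Antitone fun n => Ici (u n) := fun _ _ h => Ici_subset_Ici.2 (hmono.monotone h)
  have hIci : Ici (upperQuantile ν p) = ⋂ n, Ici (u n) := by
    ext x
    simp only [mem_Ici, mem_iInter]
    exact ⟨fun hx n => (hmem n).2.le.trans hx, fun hx => le_of_tendsto' hlim hx⟩
  rw [hIci, hanti.measure_iInter (fun n => measurableSet_Ici.nullMeasurableSet)
    ⟨0, measure_ne_top _ _⟩]
  exact le_iInf fun n => le_of_not_ge fun h => (hmem n).2.not_ge (upperQuantile_le h)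

end UpperQuantile

section LikelihoodOrdering

theorem nullSingletonClass_of_absolutelyContinuous {α : Type*} [MeasurableSpace α]
    {μ ν : Measure α} [NullSingletonClass ν] (h : μ ≪ ν) : NullSingletonClass μ :=
  ⟨fun x => h (measure_singleton x)⟩

theorem measure_le_measure_of_sdiff_le {s t : Set 𝒳} {μ : Measure 𝒳} (hs : MeasurableSet s)
    (ht : MeasurableSet t) (h : μ (s \ t) ≤ μ (t \ s)) : μ s ≤ μ t := by
  rw [← measure_sdiff_add_inter s ht, ← measure_sdiff_add_inter t hs, inter_comm t s]
  gcongr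

theorem measure_sdiff_le_of_measure_le {s t : Set 𝒳} {μ : Measure 𝒳} [IsFiniteMeasure μ]
    (hs : MeasurableSet s) (ht : MeasurableSet t) (h : μ s ≤ μ t) : μ (s \ t) ≤ μ (t \ s) := by
  rw [← measure_sdiff_add_inter s ht, ← measure_sdiff_add_inter t hs, inter_comm t s] at h
  exact (ENNReal.add_le_add_iff_right (measure_ne_top _ _)).1 h

variable {P : Measure 𝒳} {L E : 𝒳 → ℝ≥0∞}

theorem measure_superlevel_le_of_withDensity_le [IsFiniteMeasure (P.withDensity L)]
    (hL : Measurable L) (hL0 : ∀ᵐ x ∂P, L x ≠ 0) {s : ℝ≥0∞} {A : Set 𝒳} (hA : MeasurableSet A)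
    (h : P.withDensity L {x | s ≤ L x} ≤ P.withDensity L A) :
    P {x | s ≤ L x} ≤ P A := by
  set S := {x | s ≤ L x}
  have hS : MeasurableSet S := measurableSet_le measurable_const hL
  have hQ : P.withDensity L (S \ A) ≤ P.withDensity L (A \ S) :=
    measure_sdiff_le_of_measure_le hS hA h
  refine measure_le_measure_of_sdiff_le hS hA ?_
  rcases eq_or_ne s 0 with rfl | hs0
  · have hnull : P.withDensity L (S \ A) = 0 := by simpa [S] using hQ
    simp [withDensity_absolutelyContinuous' hL.aemeasurable hL0 hnull]
  rcases eq_or_ne s ⊤ with rfl | hs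
  · have hfin : ∀ᵐ x ∂P, L x < ⊤ := ae_lt_top hL <| by
      simpa using measure_ne_top (P.withDensity L) univ
    have hnull : P S = 0 := by simpa [S, ae_iff] using hfin
    simp [measure_mono_null sdiff_subset hnull]
  refine (ENNReal.mul_le_mul_iff_right hs0 hs).1 ?_
  calc s * P (S \ A)
    _ = ∫⁻ _ in S \ A, s ∂P := (setLIntegral_const _ _).symm
    _ ≤ ∫⁻ x in S \ A, L x ∂P := setLIntegral_mono' (hS.diff hA) fun x hx => hx.1
    _ = P.withDensity L (S \ A) := (withDensity_apply _ (hS.diff hA)).symm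
    _ ≤ P.withDensity L (A \ S) := hQ
    _ = ∫⁻ x in A \ S, L x ∂P := withDensity_apply _ (hA.diff hS)
    _ ≤ ∫⁻ _ in A \ S, s ∂P := setLIntegral_mono' (hA.diff hS) fun x hx => (not_le.1 hx.2).le
    _ = s * P (A \ S) := setLIntegral_const _ _

/-- The threshold `t` on `L` for which `{t ≤ L}` has the same `Q`-measure as `{y ≤ E}`: the
monotone rearrangement of `E` along `L`. -/
noncomputable def rearrangementThreshold (Q : Measure 𝒳) (L E : 𝒳 → ℝ≥0∞) (y : ℝ≥0∞) : ℝ≥0∞ :=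
  upperQuantile (Q.map L) (Q {x | y ≤ E x})

theorem rearrangementThreshold_mono (Q : Measure 𝒳) (L E : 𝒳 → ℝ≥0∞) :
    Monotone (rearrangementThreshold Q L E) :=
  fun _ _ hyz => upperQuantile_antitone (measure_mono fun _ hx => hyz.trans hx)

theorem measure_rearrangementThreshold_le {Q : Measure 𝒳} [IsFiniteMeasure Q]
    [NullSingletonClass (Q.map L)] (hL : Measurable L) (y : ℝ≥0∞) :
    Q {x | rearrangementThreshold Q L E y ≤ L x} = Q {x | y ≤ E x} := by
  have hp : Q {x | y ≤ E x} ≤ Q.map L univ := by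
    rw [Measure.map_apply hL .univ]
    exact measure_mono (subset_univ _)
  exact (Measure.map_apply hL measurableSet_Ici).symm.trans (measure_Ici_upperQuantile hp)

theorem measure_rearrangementThreshold_withDensity_le [IsFiniteMeasure (P.withDensity L)]
    [NullSingletonClass (P.map L)] (hL : Measurable L) (hE : Measurable E) (y : ℝ≥0∞) :
    P {x | rearrangementThreshold (P.withDensity L) L E y ≤ L x} ≤ P {x | y ≤ E x} := by
  have : NullSingletonClass ((P.withDensity L).map L) :=
    nullSingletonClass_of_absolutelyContinuous ((withDensity_absolutelyContinuous P L).map hL)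
  have hL0 : ∀ᵐ x ∂P, L x ≠ 0 := ae_of_ae_map hL.aemeasurable (Measure.ae_ne (P.map L) 0)
  exact measure_superlevel_le_of_withDensity_le hL hL0 (measurableSet_le measurable_const hE)
    (measure_rearrangementThreshold_le hL y).le

end LikelihoodOrdering

section TestFamily

variable {α : Type*} {ℬ : Set ℝ} {ℓ : ℝ → ℝ} {L : α → ℝ≥0∞} {δ : α → ℝ → ℝ} {t : ℝ → ℝ≥0∞}
  {b : ℝ} {p : (α → ℝ) → Prop}

theorem forall_mem_constAdv : (∀ B ∈ ConstAdv α ℬ, p B) ↔ ∀ b ∈ ℬ, p fun _ => b :=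
  ⟨fun h b hb => h _ ⟨b, hb, rfl⟩, by rintro h _ ⟨b, hb, rfl⟩; exact h b hb⟩

theorem exists_mem_constAdv : (∃ B ∈ ConstAdv α ℬ, p B) ↔ ∃ b ∈ ℬ, p fun _ => b := by
  simp [ConstAdv]

/-- The event on which `δ` rejects the null hypothesis in scenario `b`. -/
def rejectionRegion (δ : α → ℝ → ℝ) (b : ℝ) : Set α := {x | δ x b = 1}

theorem rejectionRegion_subset_le_Esup (hb : b ∈ ℬ) :
    rejectionRegion δ b ⊆ {x | ENNReal.ofReal (ℓ b) ≤ Esup ℬ ℓ δ x} := by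
  intro x (hx : δ x b = 1)
  calc ENNReal.ofReal (ℓ b)
    _ = ENNReal.ofReal (ℓ b * δ x b) := by rw [hx, mul_one]
    _ ≤ Esup ℬ ℓ δ x := le_iSup (fun c : ℬ => ENNReal.ofReal (ℓ c * δ x c)) ⟨b, hb⟩

/-- `δ` has decision curve `t` on the scenarios `ℬ`: it rejects in scenario `b` exactly when the
statistic `L` is at least `t b`. -/
def HasDecisionCurve (L : α → ℝ≥0∞) (ℬ : Set ℝ) (δ : α → ℝ → ℝ) (t : ℝ → ℝ≥0∞) : Prop :=
  ∀ x, ∀ b ∈ ℬ, δ x b = if t b ≤ L x then (1 : ℝ) else 0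

theorem HasDecisionCurve.rejectionRegion_eq (h : HasDecisionCurve L ℬ δ t) (hb : b ∈ ℬ) :
    rejectionRegion δ b = {x | t b ≤ L x} := by
  ext x
  simp [rejectionRegion, h x b hb]

/-- The test family with decision curve `t` for the statistic `L`, in every scenario. -/
noncomputable def thresholdTest (L : α → ℝ≥0∞) (t : ℝ → ℝ≥0∞) (x : α) (b : ℝ) : ℝ :=
  if t b ≤ L x then 1 else 0

theorem exists_lt_ofReal_of_lt_Esup_thresholdTest {x : α} {c : ℝ≥0∞}
    (h : c < Esup ℬ ℓ (thresholdTest L t) x) :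
    ∃ b ∈ ℬ, c < ENNReal.ofReal (ℓ b) ∧ t b ≤ L x := by
  obtain ⟨⟨b, hb⟩, hc⟩ := lt_iSup_iff.1 h
  by_cases ht : t b ≤ L x
  · exact ⟨b, hb, by simpa [thresholdTest, ht] using hc, ht⟩
  · simp [thresholdTest, ht] at hc

end TestFamily

section Risk

variable {P Q : Measure 𝒳} {ℬ : Set ℝ} {ℓ m : ℝ → ℝ} {δ ε : 𝒳 → ℝ → ℝ} {b : ℝ}

theorem measurableSet_rejectionRegion (hδ : IsTestFamily ℬ ℓ δ) (b : ℝ) :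
    MeasurableSet (rejectionRegion δ b) :=
  (hδ.1.comp (measurable_id.prodMk measurable_const)) (measurableSet_singleton 1)

theorem typeIIRisk_const (hδ : IsBinaryTestFamily ℬ ℓ δ) (hb : b ∈ ℬ) :
    typeIIRisk Q m δ (fun _ => b) = ENNReal.ofReal (m b) * Q (rejectionRegion δ b)ᶜ := by
  have hS := (measurableSet_rejectionRegion hδ.1 b).compl
  rw [← setLIntegral_const, ← lintegral_indicator hS]
  refine lintegral_congr fun x => ?_
  rcases hδ.2 x b hb with h | h <;> simp [h, rejectionRegion, indicator]

theorem typeIIRisk_const_le_iff [IsFiniteMeasure Q] (hδ : IsBinaryTestFamily ℬ ℓ δ)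
    (hε : IsBinaryTestFamily ℬ ℓ ε) (hb : b ∈ ℬ) (hm : 0 < m b) :
    typeIIRisk Q m δ (fun _ => b) ≤ typeIIRisk Q m ε (fun _ => b) ↔
      Q (rejectionRegion ε b) ≤ Q (rejectionRegion δ b) := by
  rw [typeIIRisk_const hδ hb, typeIIRisk_const hε hb,
    ENNReal.mul_le_mul_iff_right (ENNReal.ofReal_pos.2 hm).ne' ENNReal.ofReal_ne_top]
  simpa using measure_compl_le_add_iff (μ := Q) (ε := 0) (measurableSet_rejectionRegion hδ.1 b)
    (measurableSet_rejectionRegion hε.1 b)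

theorem strictlyPreferable_constAdv_iff [IsFiniteMeasure Q] (hm : ∀ b ∈ ℬ, 0 < m b)
    (hδ : IsBinaryTestFamily ℬ ℓ δ) (hε : IsBinaryTestFamily ℬ ℓ ε) :
    StrictlyPreferable P Q ℬ ℓ m (ConstAdv 𝒳 ℬ) δ ε ↔
      RiskSafe P ℬ ℓ δ ∧
      (∀ b ∈ ℬ, Q (rejectionRegion ε b) ≤ Q (rejectionRegion δ b)) ∧
      ∃ b ∈ ℬ, Q (rejectionRegion ε b) < Q (rejectionRegion δ b) := by
  have hle (b : ℝ) (hb : b ∈ ℬ) := typeIIRisk_const_le_iff (Q := Q) hδ hε hb (hm b hb)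
  have hlt (b : ℝ) (hb : b ∈ ℬ) :=
    lt_iff_lt_of_le_iff_le (typeIIRisk_const_le_iff (Q := Q) hε hδ hb (hm b hb))
  have hball : (∀ B ∈ ConstAdv 𝒳 ℬ, typeIIRisk Q m δ B ≤ typeIIRisk Q m ε B) ↔
      ∀ b ∈ ℬ, Q (rejectionRegion ε b) ≤ Q (rejectionRegion δ b) :=
    forall_mem_constAdv.trans (forall₂_congr hle)
  have hbex : (∃ B ∈ ConstAdv 𝒳 ℬ, typeIIRisk Q m δ B < typeIIRisk Q m ε B) ↔
      ∃ b ∈ ℬ, Q (rejectionRegion ε b) < Q (rejectionRegion δ b) :=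
    exists_mem_constAdv.trans (exists_congr fun b => and_congr_right (hlt b))
  rw [StrictlyPreferable, hball, hbex]

theorem not_admissibleBinary_iff {Γ : Set (𝒳 → ℝ)} (hε : RiskSafe P ℬ ℓ ε) :
    ¬ AdmissibleBinary P Q ℬ ℓ m Γ ε ↔
      ∃ δ, IsBinaryTestFamily ℬ ℓ δ ∧ StrictlyPreferable P Q ℬ ℓ m Γ δ ε := by
  simp [AdmissibleBinary, hε]

end Risk

section DecisionCurve

variable {P Q : Measure 𝒳} {ℬ : Set ℝ} {ℓ : ℝ → ℝ} {L E : 𝒳 → ℝ≥0∞} {s t : ℝ → ℝ≥0∞}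

/-- The curve `s` strictly dominates `t` under `Q` on the scenarios `ℬ`: it is never higher, and in
some scenario it adds an event of positive `Q`-measure to the rejection region. -/
def StrictlyDominates (Q : Measure 𝒳) (L : 𝒳 → ℝ≥0∞) (ℬ : Set ℝ) (s t : ℝ → ℝ≥0∞) : Prop :=
  (∀ b ∈ ℬ, s b ≤ t b) ∧ ∃ b ∈ ℬ, s b < t b ∧ 0 < Q {x | s b ≤ L x ∧ L x < t b}

theorem measure_superlevel_lt_iff [IsFiniteMeasure Q] (hL : Measurable L) {u v : ℝ≥0∞}
    (huv : u ≤ v) :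
    Q {x | v ≤ L x} < Q {x | u ≤ L x} ↔ u < v ∧ 0 < Q {x | u ≤ L x ∧ L x < v} := by
  have hsdiff : {x | u ≤ L x ∧ L x < v} = {x | u ≤ L x} \ {x | v ≤ L x} := by
    ext x
    simp
  have hsub : {x | v ≤ L x} ⊆ {x | u ≤ L x} := fun x hx => huv.trans hx
  rw [hsdiff, measure_sdiff hsub (measurableSet_le measurable_const hL).nullMeasurableSet
    (measure_ne_top _ _), tsub_pos_iff_lt]
  refine ⟨fun h => ⟨huv.lt_of_ne ?_, h⟩, And.right⟩
  rintro rfl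
  exact h.false

theorem strictlyDominates_iff [IsFiniteMeasure Q] (hL : Measurable L) :
    StrictlyDominates Q L ℬ s t ↔
      (∀ b ∈ ℬ, s b ≤ t b) ∧ ∃ b ∈ ℬ, Q {x | t b ≤ L x} < Q {x | s b ≤ L x} := by
  refine and_congr_right fun hst => exists_congr fun b => and_congr_right fun hb => ?_
  exact (measure_superlevel_lt_iff hL (hst b hb)).symm

theorem measurable_Esup_thresholdTest (hL : Measurable L) (hℓ : ∀ b ∈ ℬ, 0 ≤ ℓ b) :
    Measurable (Esup ℬ ℓ (thresholdTest L t)) := by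
  have hmono : Monotone fun y : ℝ≥0∞ =>
      ⨆ b : ℬ, ENNReal.ofReal (ℓ b * if t b ≤ y then (1 : ℝ) else 0) := by
    intro y z hyz
    refine iSup_mono fun b => ENNReal.ofReal_le_ofReal ?_
    refine mul_le_mul_of_nonneg_left ?_ (hℓ b b.2)
    split_ifs with hy hz hz
    exacts [le_rfl, absurd (hy.trans hyz) hz, zero_le_one, le_rfl]
  exact hmono.measurable.comp hL

theorem isBinaryTestFamily_thresholdTest (hL : Measurable L) (ht : Measurable t)
    (hℓ : ∀ b ∈ ℬ, 0 ≤ ℓ b) : IsBinaryTestFamily ℬ ℓ (thresholdTest L t) := by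
  refine ⟨⟨?_, fun x b _ => ?_, measurable_Esup_thresholdTest hL hℓ⟩, fun x b _ => ?_⟩
  · exact Measurable.ite (measurableSet_le (ht.comp measurable_snd) (hL.comp measurable_fst))
      measurable_const measurable_const
  all_goals unfold thresholdTest; split_ifs <;> simp

theorem typeIRisk_thresholdTest_le [SFinite P] (hL : Measurable L) (hE : Measurable E)
    (hℓ : ∀ b ∈ ℬ, 0 ≤ ℓ b) {G : ℝ≥0∞ → ℝ≥0∞} (hG : Monotone G)
    (h : ∀ y, P {x | G y ≤ L x} ≤ P {x | y ≤ E x}) :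
    typeIRisk P ℬ ℓ (thresholdTest L fun b => G (ENNReal.ofReal (ℓ b))) ≤ ∫⁻ x, E x ∂P := by
  refine lintegral_le_lintegral_of_measure_lt_le_measure_le
    (measurable_Esup_thresholdTest hL hℓ) hE fun c => (measure_mono fun x hx => ?_).trans (h c)
  obtain ⟨b, -, hc, hb⟩ := exists_lt_ofReal_of_lt_Esup_thresholdTest hx
  exact (hG hc.le).trans hb

end DecisionCurve

section LikelihoodRatio

variable {P Q : Measure 𝒳} {ℬ : Set ℝ} {ℓ : ℝ → ℝ} {ψ : 𝒳 → ℝ → ℝ} {b : ℝ}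

/-- The likelihood ratio `LR P Q` on the scale `[0, ∞]` of decision curves. -/
noncomputable def likelihoodRatio (P Q : Measure 𝒳) (x : 𝒳) : ℝ≥0∞ := ENNReal.ofReal (LR P Q x)

theorem measurable_likelihoodRatio (P Q : Measure 𝒳) : Measurable (likelihoodRatio P Q) :=
  (Measure.measurable_rnDeriv Q P).ennreal_toReal.ennreal_ofReal

theorem withDensity_likelihoodRatio [SigmaFinite P] [SigmaFinite Q] (h : Q ≪ P) :
    P.withDensity (likelihoodRatio P Q) = Q :=
  (withDensity_congr_ae (ofReal_toReal_ae_eq (Measure.rnDeriv_lt_top Q P))).trans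
    (Measure.withDensity_rnDeriv_eq Q P h)

theorem AtomlessLR.nullSingletonClass_map_likelihoodRatio (h : AtomlessLR P Q) :
    NullSingletonClass (P.map (likelihoodRatio P Q)) := by
  refine ⟨fun c => ?_⟩
  rw [Measure.map_apply (measurable_likelihoodRatio P Q) (measurableSet_singleton c)]
  refine measure_mono_null ?_ (h c.toReal)
  rintro x rfl
  exact (ENNReal.toReal_ofReal ENNReal.toReal_nonneg).symm

/-- The decision curve of the likelihood-ratio test family that, in scenario `b`, rejects with the
same `Q`-probability as the event that the e-value of `ψ` is at least `ℓ b`. -/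
noncomputable def rearrangedCurve (P Q : Measure 𝒳) (ℬ : Set ℝ) (ℓ : ℝ → ℝ) (ψ : 𝒳 → ℝ → ℝ)
    (b : ℝ) : ℝ≥0∞ :=
  rearrangementThreshold Q (likelihoodRatio P Q) (Esup ℬ ℓ ψ) (ENNReal.ofReal (ℓ b))

theorem measurable_rearrangedCurve (hℓ : Measurable ℓ) :
    Measurable (rearrangedCurve P Q ℬ ℓ ψ) :=
  (rearrangementThreshold_mono _ _ _).measurable.comp hℓ.ennreal_ofReal

theorem monotoneOn_rearrangedCurve (hℓ : MonotoneOn ℓ ℬ) :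
    MonotoneOn (rearrangedCurve P Q ℬ ℓ ψ) ℬ :=
  fun _ hb _ hc hbc =>
    rearrangementThreshold_mono _ _ _ (ENNReal.ofReal_le_ofReal (hℓ hb hc hbc))

theorem rearrangedCurve_le (hb : b ∈ ℬ) {u : ℝ≥0∞}
    (h : Q {x | u ≤ likelihoodRatio P Q x} ≤ Q (rejectionRegion ψ b)) :
    rearrangedCurve P Q ℬ ℓ ψ b ≤ u := by
  refine upperQuantile_le ?_
  rw [Measure.map_apply (measurable_likelihoodRatio P Q) measurableSet_Ici]
  exact h.trans (measure_mono (rejectionRegion_subset_le_Esup hb))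

theorem measure_rejectionRegion_le_rearrangedCurve [IsFiniteMeasure Q] (hQP : Q ≪ P)
    (hcont : AtomlessLR P Q) (hb : b ∈ ℬ) :
    Q (rejectionRegion ψ b) ≤ Q {x | rearrangedCurve P Q ℬ ℓ ψ b ≤ likelihoodRatio P Q x} := by
  have hL := measurable_likelihoodRatio P Q
  have := hcont.nullSingletonClass_map_likelihoodRatio
  have : NullSingletonClass (Q.map (likelihoodRatio P Q)) :=
    nullSingletonClass_of_absolutelyContinuous (hQP.map hL)
  exact (measure_mono (rejectionRegion_subset_le_Esup hb)).trans
    (measure_rearrangementThreshold_le hL _).ge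

theorem typeIRisk_thresholdTest_rearrangedCurve_le [SigmaFinite P] [IsFiniteMeasure Q]
    (hQP : Q ≪ P) (hcont : AtomlessLR P Q) (hℓ : ∀ b ∈ ℬ, 0 ≤ ℓ b) (hψ : Measurable (Esup ℬ ℓ ψ)) :
    typeIRisk P ℬ ℓ (thresholdTest (likelihoodRatio P Q) (rearrangedCurve P Q ℬ ℓ ψ)) ≤
      typeIRisk P ℬ ℓ ψ := by
  have hL := measurable_likelihoodRatio P Q
  have hQ : P.withDensity (likelihoodRatio P Q) = Q := withDensity_likelihoodRatio hQP
  have := hcont.nullSingletonClass_map_likelihoodRatio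
  have : IsFiniteMeasure (P.withDensity (likelihoodRatio P Q)) := by rwa [hQ]
  have htail := measure_rearrangementThreshold_withDensity_le (P := P) hL hψ
  rw [hQ] at htail
  exact typeIRisk_thresholdTest_le hL hψ hℓ (rearrangementThreshold_mono _ _ _) htail

end LikelihoodRatio

theorem stmt17_general (P Q : Measure 𝒳) [SigmaFinite P] [IsFiniteMeasure Q] (hQP : Q ≪ P)
    (ℬ : Set ℝ) (ℓ : ℝ → ℝ) (hℓmeas : Measurable ℓ) (hℓ : ∀ b ∈ ℬ, 0 ≤ ℓ b)
    (hℓmono : MonotoneOn ℓ ℬ) (m : ℝ → ℝ) (hm : ∀ b ∈ ℬ, 0 < m b) (hcont : AtomlessLR P Q)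
    (φ : 𝒳 → ℝ → ℝ) (hφ : IsBinaryTestFamily ℬ ℓ φ) (hφsafe : RiskSafe P ℬ ℓ φ)
    (tφ : ℝ → ℝ≥0∞) (hφcurve : HasDecisionCurve (likelihoodRatio P Q) ℬ φ tφ) :
    ¬ AdmissibleBinary P Q ℬ ℓ m (ConstAdv 𝒳 ℬ) φ ↔
      ∃ (ψ : 𝒳 → ℝ → ℝ) (tψ : ℝ → ℝ≥0∞),
        IsBinaryTestFamily ℬ ℓ ψ ∧ RiskSafe P ℬ ℓ ψ ∧ MonotoneOn tψ ℬ ∧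
        HasDecisionCurve (likelihoodRatio P Q) ℬ ψ tψ ∧
        StrictlyDominates Q (likelihoodRatio P Q) ℬ tψ tφ := by
  have hL := measurable_likelihoodRatio P Q
  simp only [not_admissibleBinary_iff hφsafe, strictlyDominates_iff hL]
  constructor
  · rintro ⟨ψ, hψ, hpref⟩
    obtain ⟨hψsafe, hle, b₀, hb₀, hlt⟩ := (strictlyPreferable_constAdv_iff hm hψ hφ).1 hpref
    refine ⟨thresholdTest _ _, rearrangedCurve P Q ℬ ℓ ψ,
      isBinaryTestFamily_thresholdTest hL (measurable_rearrangedCurve hℓmeas) hℓ,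
      (typeIRisk_thresholdTest_rearrangedCurve_le hQP hcont hℓ hψ.1.2.2).trans hψsafe,
      monotoneOn_rearrangedCurve hℓmono, fun _ _ _ => rfl, fun b hb => ?_, b₀, hb₀, ?_⟩
    · exact rearrangedCurve_le hb (hφcurve.rejectionRegion_eq hb ▸ hle b hb)
    · rw [← hφcurve.rejectionRegion_eq hb₀]
      exact hlt.trans_le (measure_rejectionRegion_le_rearrangedCurve hQP hcont hb₀)
  · rintro ⟨ψ, tψ, hψ, hψsafe, -, hψcurve, hle, b₀, hb₀, hlt⟩
    refine ⟨ψ, hψ, (strictlyPreferable_constAdv_iff hm hψ hφ).2 ⟨hψsafe, ?_, b₀, hb₀, ?_⟩⟩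
    · intro b hb
      rw [hφcurve.rejectionRegion_eq hb, hψcurve.rejectionRegion_eq hb]
      exact measure_mono fun x hx => (hle b hb).trans hx
    · rwa [hφcurve.rejectionRegion_eq hb₀, hψcurve.rejectionRegion_eq hb₀]

/-- when the likelihood ratio is atomless under `P`, a type-I risk safe
binary test family `φ` with (increasing) decision curve `tφ` is `𝐂`-inadmissible among
binary families iff there is a type-I risk safe binary family `ψ` whose decision curve
`tψ` `Q`-strictly dominates `tφ`. -/
theorem stmt17
    [StandardBorelSpace 𝒳]
    (P Q : Measure 𝒳) [IsProbabilityMeasure P] [IsProbabilityMeasure Q]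
    (hPQ : P ≪ Q) (hQP : Q ≪ P)
    (ℬ : Set ℝ) (hℬne : ℬ.Nonempty)
    (ℓ : ℝ → ℝ) (hℓmeas : Measurable ℓ) (hℓpos : ∀ b ∈ ℬ, 0 < ℓ b)
    (hℓmono : ∀ b₁ ∈ ℬ, ∀ b₂ ∈ ℬ, b₁ ≤ b₂ → ℓ b₁ ≤ ℓ b₂)
    (hℓgt1 : ∃ b ∈ ℬ, 1 < ℓ b)
    (m : ℝ → ℝ) (hm : ∀ b ∈ ℬ, 0 < m b)
    (hcont : AtomlessLR P Q)
    (φ : 𝒳 → ℝ → ℝ) (hφ : IsBinaryTestFamily ℬ ℓ φ) (hφsafe : RiskSafe P ℬ ℓ φ)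
    (tφ : ℝ → ℝ≥0∞)
    (htφmono : ∀ b₁ ∈ ℬ, ∀ b₂ ∈ ℬ, b₁ ≤ b₂ → tφ b₁ ≤ tφ b₂)
    (hφform : ∀ x, ∀ b ∈ ℬ,
      φ x b = if tφ b ≤ ENNReal.ofReal (LR P Q x) then (1 : ℝ) else 0) :
    (¬ AdmissibleBinary P Q ℬ ℓ m (ConstAdv 𝒳 ℬ) φ ↔
      ∃ (ψ : 𝒳 → ℝ → ℝ) (tψ : ℝ → ℝ≥0∞),
        IsBinaryTestFamily ℬ ℓ ψ ∧ RiskSafe P ℬ ℓ ψ ∧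
        (∀ b₁ ∈ ℬ, ∀ b₂ ∈ ℬ, b₁ ≤ b₂ → tψ b₁ ≤ tψ b₂) ∧
        (∀ x, ∀ b ∈ ℬ,
          ψ x b = if tψ b ≤ ENNReal.ofReal (LR P Q x) then (1 : ℝ) else 0) ∧
        (∀ b ∈ ℬ, tψ b ≤ tφ b) ∧
        ∃ bstar ∈ ℬ, tψ bstar < tφ bstar ∧
          0 < Q {x | tψ bstar ≤ ENNReal.ofReal (LR P Q x) ∧
                     ENNReal.ofReal (LR P Q x) < tφ bstar}) := by
  exact stmt17_general P Q hQP ℬ ℓ hℓmeas (fun b hb => (hℓpos b hb).le)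
    (fun _ h₁ _ h₂ => hℓmono _ h₁ _ h₂) m hm hcont φ hφ hφsafe tφ hφform

end PostHocTesting
end

section
/- Assume P and Q are continuous (the distribution of Λ under P is atomless). Let φ be a type-I risk safe binary test family with decision curve t, i.e., φ(x,b) = 1{Λ(x) ≥ t(b)} with t : ℬ → [0,∞] increasing. If φ is 𝐂-admissible among binary test families, then t is minimal: for every b* ∈ ℬ such that sup_{b<b*} ℓ(b) = ℓ(b*), either sup_{b<b*} t(b) = t(b*) or P({x : sup_{b<b*} t(b) ≤ Λ(x) < t(b*)}) = 0. -/
open MeasureTheory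
open scoped ENNReal

namespace PostHocTesting

variable {𝒳 : Type*} [MeasurableSpace 𝒳]

/-!
A binary test family may reject in scenario `b` at no cost in type-I risk at every point whose
e-value is already at least `ℓ b`: the supremum defining the e-value does not change. Doing so can
only lower type-II risks, against any adversary, so an admissible family must already reject at
`Q`-almost all such points. If `ℓ bstar` is the supremum of the `ℓ b` over `b < bstar`, a family
with decision curve `t` has e-value at least `ℓ bstar` as soon as `Λ` reaches every `t b` with
`b < bstar`. Hence almost surely it then rejects in scenario `bstar` too, that is, `t bstar ≤ Λ`.
-/

/-- The test family that rejects in scenario `b` on `A` and otherwise agrees with `φ`. It is the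
competitor against which admissibility of `φ` is tested. -/
noncomputable def rejectOn {Ω : Type*} (A : Set Ω) (b : ℝ) (φ : Ω → ℝ → ℝ) (x : Ω) (c : ℝ) : ℝ :=
  open Classical in if x ∈ A ∧ c = b then 1 else φ x c

section EValue

variable {Ω : Type*} {ℬ : Set ℝ} {ℓ : ℝ → ℝ} {φ : Ω → ℝ → ℝ} {A : Set Ω} {b c : ℝ} {x : Ω}

theorem rejectOn_of_mem (hx : x ∈ A) : rejectOn A b φ x b = 1 :=
  if_pos ⟨hx, rfl⟩

theorem rejectOn_of_not (h : ¬(x ∈ A ∧ c = b)) : rejectOn A b φ x c = φ x c :=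
  if_neg h

theorem le_rejectOn (h : φ x b ≤ 1) : φ x c ≤ rejectOn A b φ x c := by
  by_cases hxc : x ∈ A ∧ c = b
  · obtain ⟨hx, rfl⟩ := hxc
    rwa [rejectOn_of_mem hx]
  · exact (rejectOn_of_not hxc).ge

theorem rejectOn_eq_zero_or_one (h : φ x c = 0 ∨ φ x c = 1) :
    rejectOn A b φ x c = 0 ∨ rejectOn A b φ x c = 1 := by
  by_cases hxc : x ∈ A ∧ c = b
  · obtain ⟨hx, rfl⟩ := hxc
    exact .inr (rejectOn_of_mem hx)
  · rwa [rejectOn_of_not hxc]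

theorem measurable_rejectOn [MeasurableSpace Ω] (hA : MeasurableSet A)
    (hφ : Measurable fun p : Ω × ℝ => φ p.1 p.2) :
    Measurable fun p : Ω × ℝ => rejectOn A b φ p.1 p.2 :=
  Measurable.ite ((measurable_fst hA).inter (measurable_snd (measurableSet_singleton b)))
    measurable_const hφ

theorem le_Esup (hb : b ∈ ℬ) : ENNReal.ofReal (ℓ b * φ x b) ≤ Esup ℬ ℓ φ x :=
  le_iSup (fun c : ℬ => ENNReal.ofReal (ℓ c * φ x c)) ⟨b, hb⟩

theorem ofReal_le_Esup_of_isLUB {s : Set ℝ} {r : ℝ} (hs : s ⊆ ℬ)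
    (hr : IsLUB (ℓ '' s) r) (hφ : ∀ c ∈ s, φ x c = 1) :
    ENNReal.ofReal r ≤ Esup ℬ ℓ φ x := by
  by_cases htop : Esup ℬ ℓ φ x = ∞
  · exact htop ▸ le_top
  rw [ENNReal.ofReal_le_iff_le_toReal htop]
  refine hr.2 (Set.forall_mem_image.2 fun c hc => ?_)
  rw [← ENNReal.ofReal_le_iff_le_toReal htop]
  simpa only [hφ c hc, mul_one] using le_Esup (ℓ := ℓ) (φ := φ) (x := x) (hs hc)

theorem Esup_rejectOn (hφ : ∀ x, φ x b ∈ Set.Icc (0 : ℝ) 1)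
    (hA : ∀ x ∈ A, ENNReal.ofReal (ℓ b) ≤ Esup ℬ ℓ φ x) :
    Esup ℬ ℓ (rejectOn A b φ) = Esup ℬ ℓ φ := by
  funext x
  refine le_antisymm (iSup_le fun ⟨c, hc⟩ => ?_) (iSup_mono fun ⟨c, hc⟩ => ?_)
  all_goals by_cases hxc : x ∈ A ∧ c = b
  · obtain ⟨hx, rfl⟩ := hxc
    simpa only [rejectOn_of_mem hx, mul_one] using hA x hx
  · simpa only [rejectOn_of_not hxc] using le_Esup hc
  · obtain ⟨hx, rfl⟩ := hxc
    rw [rejectOn_of_mem hx, mul_one, ENNReal.ofReal_mul' (hφ x).1]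
    exact mul_le_of_le_one_right' (ENNReal.ofReal_le_one.2 (hφ x).2)
  · rw [rejectOn_of_not hxc]

end EValue

theorem isLUB_sSup_of_pos {s : Set ℝ} (hs : 0 < sSup s) : IsLUB s (sSup s) := by
  refine Real.isLUB_sSup ?_ ?_
  · by_contra hne
    simp [Set.not_nonempty_iff_eq_empty.1 hne] at hs
  · by_contra hbdd
    simp [Real.sSup_of_not_bddAbove hbdd] at hs

variable {P Q : Measure 𝒳} {ℬ : Set ℝ} {ℓ m : ℝ → ℝ} {Γ : Set (𝒳 → ℝ)} {φ : 𝒳 → ℝ → ℝ}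
  {A : Set 𝒳} {b : ℝ}

theorem IsBinaryTestFamily.rejectOn (hφ : IsBinaryTestFamily ℬ ℓ φ) (hb : b ∈ ℬ)
    (hAmeas : MeasurableSet A) (hA : ∀ x ∈ A, ENNReal.ofReal (ℓ b) ≤ Esup ℬ ℓ φ x) :
    IsBinaryTestFamily ℬ ℓ (rejectOn A b φ) := by
  obtain ⟨⟨hmeas, hIcc, hEsup⟩, hbin⟩ := hφ
  refine ⟨⟨measurable_rejectOn hAmeas hmeas, fun x c hc => ?_, ?_⟩,
    fun x c hc => rejectOn_eq_zero_or_one (hbin x c hc)⟩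
  · rcases rejectOn_eq_zero_or_one (A := A) (b := b) (hbin x c hc) with h | h <;> simp [h]
  · rwa [Esup_rejectOn (fun x => hIcc x b hb) hA]

theorem typeIIRisk_rejectOn_le (hφ : ∀ x, φ x b ≤ 1) (hm : 0 ≤ m b) (B : 𝒳 → ℝ) :
    typeIIRisk Q m (rejectOn A b φ) B ≤ typeIIRisk Q m φ B := by
  refine lintegral_mono fun x => ENNReal.ofReal_le_ofReal ?_
  by_cases hB : B x = b
  · rw [hB]
    gcongr
    exact le_rejectOn (hφ x)
  · rw [rejectOn_of_not fun h => hB h.2]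

theorem typeIIRisk_const_ne_top [IsFiniteMeasure Q] (hφ : ∀ x, 0 ≤ φ x b) (hm : 0 ≤ m b) :
    typeIIRisk Q m φ (fun _ => b) ≠ ∞ := by
  refine ne_top_of_le_ne_top (b := ∫⁻ _, ENNReal.ofReal (m b) ∂Q)
    (by simp [ENNReal.mul_eq_top]) (lintegral_mono fun x => ENNReal.ofReal_le_ofReal ?_)
  exact mul_le_of_le_one_right hm (sub_le_self 1 (hφ x))

theorem typeIIRisk_rejectOn_lt [IsFiniteMeasure Q] (hmeas : Measurable fun x => φ x b)
    (hφ : ∀ x, φ x b ∈ Set.Icc (0 : ℝ) 1) (hm : 0 < m b)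
    (hA : ¬∀ᵐ x ∂Q, x ∈ A → φ x b = 1) :
    typeIIRisk Q m (rejectOn A b φ) (fun _ => b) < typeIIRisk Q m φ (fun _ => b) := by
  refine lintegral_strict_mono_of_ae_le_of_frequently_ae_lt
    ((measurable_const.sub hmeas).const_mul (m b)).ennreal_ofReal.aemeasurable
    (ne_top_of_le_ne_top (typeIIRisk_const_ne_top (fun x => (hφ x).1) hm.le)
      (typeIIRisk_rejectOn_le (fun x => (hφ x).2) hm.le _))
    (.of_forall fun x => ENNReal.ofReal_le_ofReal ?_)
    ((Filter.not_eventually.1 hA).mono fun x hx => ?_)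
  · gcongr
    exact le_rejectOn (hφ x).2
  · obtain ⟨hxA, hxφ⟩ := Classical.not_imp.1 hx
    have hlt : φ x b < 1 := (hφ x).2.lt_of_ne hxφ
    simp only [rejectOn_of_mem hxA, sub_self, mul_zero, ENNReal.ofReal_zero]
    exact (ENNReal.ofReal_pos.2 (mul_pos hm (sub_pos.2 hlt))).ne

theorem AdmissibleBinary.ae_eq_one_of_ofReal_le_Esup [IsFiniteMeasure Q]
    (hadm : AdmissibleBinary P Q ℬ ℓ m Γ φ) (hφ : IsBinaryTestFamily ℬ ℓ φ)
    (hb : b ∈ ℬ) (hbΓ : (fun _ => b) ∈ Γ) (hm : 0 < m b) :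
    ∀ᵐ x ∂Q, ENNReal.ofReal (ℓ b) ≤ Esup ℬ ℓ φ x → φ x b = 1 := by
  obtain ⟨hmeas, hIcc, hEsup⟩ := hφ.1
  let A : Set 𝒳 := {x | ENNReal.ofReal (ℓ b) ≤ Esup ℬ ℓ φ x}
  have hA : ∀ x ∈ A, ENNReal.ofReal (ℓ b) ≤ Esup ℬ ℓ φ x := fun _ hx => hx
  have hAmeas : MeasurableSet A := measurableSet_le measurable_const hEsup
  have hφb : ∀ x, φ x b ∈ Set.Icc (0 : ℝ) 1 := fun x => hIcc x b hb
  by_contra hnot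
  have hsafe : RiskSafe P ℬ ℓ (rejectOn A b φ) := by
    simpa only [RiskSafe, typeIRisk, Esup_rejectOn hφb hA] using hadm.1
  refine hadm.2 (rejectOn A b φ) (hφ.rejectOn hb hAmeas hA)
    ⟨hsafe, fun B _ => typeIIRisk_rejectOn_le (fun x => (hφb x).2) hm.le B, _, hbΓ, ?_⟩
  exact typeIIRisk_rejectOn_lt (hmeas.comp measurable_prodMk_right) hφb hm hnot

theorem stmt18_general [IsFiniteMeasure Q] {α : Type*} [CompleteLattice α] {T : 𝒳 → α}
    {t : ℝ → α} (hPQ : P ≪ Q) (hφ : IsBinaryTestFamily ℬ ℓ φ)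
    (hφt : ∀ x, ∀ c ∈ ℬ, φ x c = 1 ↔ t c ≤ T x) (hadm : AdmissibleBinary P Q ℬ ℓ m Γ φ)
    (hb : b ∈ ℬ) (hbΓ : (fun _ => b) ∈ Γ) (hm : 0 < m b)
    (hℓ : IsLUB (ℓ '' {c ∈ ℬ | c < b}) (ℓ b)) :
    P {x | (⨆ c ∈ {c ∈ ℬ | c < b}, t c) ≤ T x ∧ T x < t b} = 0 := by
  refine measure_eq_zero_iff_ae_notMem.2 ?_
  filter_upwards [hPQ.ae_le (hadm.ae_eq_one_of_ofReal_le_Esup hφ hb hbΓ hm)]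
  rintro x hx ⟨hsup, hlt⟩
  have hreject : ∀ c ∈ {c ∈ ℬ | c < b}, φ x c = 1 := fun c hc =>
    (hφt x c hc.1).2 (iSup₂_le_iff.1 hsup c hc)
  have hE : ENNReal.ofReal (ℓ b) ≤ Esup ℬ ℓ φ x :=
    ofReal_le_Esup_of_isLUB (Set.sep_subset _ _) hℓ hreject
  exact hlt.not_ge ((hφt x b hb).1 (hx hE))

/-- when the likelihood ratio is atomless under `P`, the decision curve of
a `𝐂`-admissible type-I risk safe binary test family is minimal: whenever
`sup_{b<b*} ℓ(b) = ℓ(b*)`, either `sup_{b<b*} t(b) = t(b*)` or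
`P(sup_{b<b*} t(b) ≤ Λ < t(b*)) = 0`. -/
theorem stmt18
    [StandardBorelSpace 𝒳]
    (P Q : Measure 𝒳) [IsProbabilityMeasure P] [IsProbabilityMeasure Q]
    (hPQ : P ≪ Q) (hQP : Q ≪ P)
    (ℬ : Set ℝ) (hℬne : ℬ.Nonempty)
    (ℓ : ℝ → ℝ) (hℓmeas : Measurable ℓ) (hℓpos : ∀ b ∈ ℬ, 0 < ℓ b)
    (hℓmono : ∀ b₁ ∈ ℬ, ∀ b₂ ∈ ℬ, b₁ ≤ b₂ → ℓ b₁ ≤ ℓ b₂)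
    (hℓgt1 : ∃ b ∈ ℬ, 1 < ℓ b)
    (m : ℝ → ℝ) (hm : ∀ b ∈ ℬ, 0 < m b)
    (hcont : AtomlessLR P Q)
    (φ : 𝒳 → ℝ → ℝ) (hφ : IsBinaryTestFamily ℬ ℓ φ) (hφsafe : RiskSafe P ℬ ℓ φ)
    (t : ℝ → ℝ≥0∞)
    (htmono : ∀ b₁ ∈ ℬ, ∀ b₂ ∈ ℬ, b₁ ≤ b₂ → t b₁ ≤ t b₂)
    (hφform : ∀ x, ∀ b ∈ ℬ,
      φ x b = if t b ≤ ENNReal.ofReal (LR P Q x) then (1 : ℝ) else 0)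
    (hadm : AdmissibleBinary P Q ℬ ℓ m (ConstAdv 𝒳 ℬ) φ) :
    ∀ bstar ∈ ℬ, sSup (ℓ '' {b ∈ ℬ | b < bstar}) = ℓ bstar →
      ((⨆ b ∈ {c ∈ ℬ | c < bstar}, t b) = t bstar ∨
        P {x | (⨆ b ∈ {c ∈ ℬ | c < bstar}, t b) ≤ ENNReal.ofReal (LR P Q x) ∧
               ENNReal.ofReal (LR P Q x) < t bstar} = 0) := by
  intro bstar hbstar hsup
  exact .inr (stmt18_general hPQ hφ (fun x b hb => by simp [hφform x b hb]) hadm hbstar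
    ⟨bstar, hbstar, rfl⟩ (hm bstar hbstar) (hsup ▸ isLUB_sSup_of_pos (hsup ▸ hℓpos bstar hbstar)))

end PostHocTesting
end
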